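/- The following are equivalent: (i) κ is weakly compact and λ^{<κ} < cov(M_{κ,κ}); (ii) I_{κ,λ}⁺ →_κ (I_{κ,λ}⁺)²; (iii) I_{κ,λ}⁺ →_{κ,κ} (I_{κ,λ}⁺; κ)². -/

import Mathlib

open Cardinal Set

namespace PaperFormal

noncomputable section

/-- The least (small) cardinality of a family `F : Set X` satisfying `P`. -/
def leastCard {X : Type 1} (P : Set X → Prop) : Cardinal.{0} :=
  sInf {c : Cardinal.{0} | ∃ F : Set X, P F ∧ Cardinal.lift.{1} c = #F}

/-- The collection of (codings of) functions from `κ` to `κ`. -/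
def funOn (κ : Cardinal.{0}) : Set (Ordinal.{0} → Ordinal.{0}) :=
  {f | ∀ α < κ.ord, f α < κ.ord}

/-- The unequality number `U_κ`. -/
def uneq (κ : Cardinal.{0}) : Cardinal.{0} :=
  leastCard fun F : Set (Ordinal.{0} → Ordinal.{0}) => F ⊆ funOn κ ∧
    ∀ g ∈ funOn κ, ∃ f ∈ F, {α | α < κ.ord ∧ f α = g α} = ∅

/-- The dominating number `d_κ`. -/
def domNum (κ : Cardinal.{0}) : Cardinal.{0} :=
  leastCard fun F : Set (Ordinal.{0} → Ordinal.{0}) => F ⊆ funOn κ ∧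
    ∀ g ∈ funOn κ, ∃ f ∈ F, ∀ α < κ.ord, g α < f α

/-- The number `d̄_κ`. -/
def domBar (κ : Cardinal.{0}) : Cardinal.{0} :=
  leastCard fun X : Set (Ordinal.{0} → Ordinal.{0}) => X ⊆ funOn κ ∧
    ∀ g ∈ funOn κ, ∃ x ⊆ X, x.Nonempty ∧ #x < Cardinal.lift.{1} κ ∧
      ∀ α < κ.ord, g α < sSup {o | ∃ f ∈ x, f α = o}

/-- The generalized Cantor space `^ρ2`, with points coded as subsets of `Iio ρ.ord`. -/
def cantor (ρ : Cardinal.{0}) : Set (Set Ordinal.{0}) := {x | x ⊆ Iio ρ.ord}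

/-- A forcing condition: a pair `(a, t)` with `t ⊆ a ⊆ Iio ρ.ord` and `|a| < ν`. -/
def IsCond (ν ρ : Cardinal.{0}) (a t : Set Ordinal.{0}) : Prop :=
  a ⊆ Iio ρ.ord ∧ t ⊆ a ∧ #a < Cardinal.lift.{1} ν

/-- The basic open set determined by a condition. -/
def basicOpen (ρ : Cardinal.{0}) (a t : Set Ordinal.{0}) : Set (Set Ordinal.{0}) :=
  {x | x ⊆ Iio ρ.ord ∧ x ∩ a = t}

/-- Dense open subsets of `^ρ2` (for the `<ν`-support topology). -/
def DenseOpen (ν ρ : Cardinal.{0}) (D : Set (Set Ordinal.{0})) : Prop :=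
  D ⊆ cantor ρ ∧
  (∀ x ∈ D, ∃ a t, IsCond ν ρ a t ∧ x ∈ basicOpen ρ a t ∧ basicOpen ρ a t ⊆ D) ∧
  (∀ a t, IsCond ν ρ a t → (basicOpen ρ a t ∩ D).Nonempty)

/-- Members of `M_{ν,ρ}`. -/
def Meager (ν ρ : Cardinal.{0}) (W : Set (Set Ordinal.{0})) : Prop :=
  W ⊆ cantor ρ ∧ ∃ X : Set (Set (Set Ordinal.{0})), X.Nonempty ∧
    #X ≤ Cardinal.lift.{1} ν ∧ (∀ D ∈ X, DenseOpen ν ρ D) ∧ W ∩ ⋂₀ X = ∅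

/-- The covering number for category `cov(M_{ν,ρ})`. -/
def covM (ν ρ : Cardinal.{0}) : Cardinal.{0} :=
  leastCard fun Y : Set (Set (Set Ordinal.{0})) =>
    (∀ W ∈ Y, Meager ν ρ W) ∧ ⋃₀ Y = cantor ρ

/-- A (`κ`-complete) ideal on `κ`. -/
structure IdealK (κ : Cardinal.{0}) where
  mem : Set (Set Ordinal.{0})
  subset_iio : ∀ A ∈ mem, A ⊆ Iio κ.ord
  singleton_mem : ∀ α < κ.ord, {α} ∈ mem
  subset_mem : ∀ A ∈ mem, ∀ B ⊆ A, B ∈ mem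
  sUnion_mem : ∀ X : Set (Set Ordinal.{0}), X ⊆ mem → #X < Cardinal.lift.{1} κ → ⋃₀ X ∈ mem
  ne_top : Iio κ.ord ∉ mem

/-- `J⁺`, the sets (⊆ κ) not in the ideal. -/
def IdealK.plus {κ : Cardinal.{0}} (J : IdealK κ) : Set (Set Ordinal.{0}) :=
  {A | A ⊆ Iio κ.ord ∧ A ∉ J.mem}

/-- `cof(J)`. -/
def IdealK.cof {κ : Cardinal.{0}} (J : IdealK κ) : Cardinal.{0} :=
  leastCard fun X : Set (Set Ordinal.{0}) =>
    X ⊆ J.mem ∧ ∀ A, A ∈ J.mem ↔ ∃ B ∈ X, A ⊆ B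

/-- `cof̄(J)`. -/
def IdealK.cofBar {κ : Cardinal.{0}} (J : IdealK κ) : Cardinal.{0} :=
  leastCard fun X : Set (Set Ordinal.{0}) =>
    X ⊆ J.mem ∧ ∀ A ∈ J.mem, ∃ x ⊆ X, #x < Cardinal.lift.{1} κ ∧ A ⊆ ⋃₀ x

/-- `non_κ(P)`. -/
def nonK (κ : Cardinal.{0}) (P : IdealK κ → Prop) : Cardinal.{0} :=
  sInf {c | ∃ J : IdealK κ, J.cof = c ∧ ¬ P J}

/-- `non̄_κ(P)`. -/
def nonBarK (κ : Cardinal.{0}) (P : IdealK κ → Prop) : Cardinal.{0} :=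
  sInf {c | ∃ J : IdealK κ, J.cofBar = c ∧ ¬ P J}

/-- Weak `P`-point. -/
def WeakPPoint {κ : Cardinal.{0}} (J : IdealK κ) : Prop :=
  ∀ A ∈ J.plus, ∀ f : Ordinal.{0} → Ordinal.{0},
    (∀ α ∈ A, f α < κ.ord) → (∀ β, {α ∈ A | f α = β} ∈ J.mem) →
    ∃ B ∈ J.plus, B ⊆ A ∧ ∀ β, #{α ∈ B | f α = β} < Cardinal.lift.{1} κ

/-- Weak `Q`-point. -/
def WeakQPoint {κ : Cardinal.{0}} (J : IdealK κ) : Prop :=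
  ∀ A ∈ J.plus, ∀ g ∈ funOn κ,
    ∃ B ∈ J.plus, B ⊆ A ∧ ∀ α ∈ B, ∀ β ∈ B, α < β → g α < β

/-- Weakly selective ideal. -/
def WeaklySelective {κ : Cardinal.{0}} (J : IdealK κ) : Prop :=
  WeakPPoint J ∧ WeakQPoint J

/-- Weak semi-`Q`-point. -/
def WeakSemiQPoint {κ : Cardinal.{0}} (J : IdealK κ) : Prop :=
  ∀ A ∈ J.plus, ∀ f : Ordinal.{0} → Ordinal.{0},
    (∀ α ∈ A, f α < κ.ord) →
    (∀ β, #{α ∈ A | f α = β} < Cardinal.lift.{1} κ) →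
    ∃ C ∈ J.plus, C ⊆ A ∧ ∀ β < κ.ord, #{α ∈ C | f α = β} ≤ Cardinal.lift.{1} β.card

/-- `P_κ(λ)`, coded as the small subsets of `Iio λ.ord`. -/
def smallSet (κ lam : Cardinal.{0}) : Set (Set Ordinal.{0}) :=
  {a | a ⊆ Iio lam.ord ∧ #a < Cardinal.lift.{1} κ}

/-- The ideal `I_{κ,λ}` of noncofinal subsets of `P_κ(λ)`. -/
def Ikl (κ lam : Cardinal.{0}) : Set (Set (Set Ordinal.{0})) :=
  {A | A ⊆ smallSet κ lam ∧ ∃ a ∈ smallSet κ lam, ∀ b ∈ A, ¬ a ⊆ b}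

/-- A (`κ`-complete fine) ideal on `P_κ(λ)`. -/
structure IdealP (κ lam : Cardinal.{0}) where
  mem : Set (Set (Set Ordinal.{0}))
  subset_pk : ∀ A ∈ mem, A ⊆ smallSet κ lam
  fine : Ikl κ lam ⊆ mem
  subset_mem : ∀ A ∈ mem, ∀ B ⊆ A, B ∈ mem
  sUnion_mem : ∀ X : Set (Set (Set Ordinal.{0})), X ⊆ mem →
    #X < Cardinal.lift.{1} κ → ⋃₀ X ∈ mem
  ne_top : smallSet κ lam ∉ mem

/-- `H⁺` computed from the underlying collection `Hm` of an ideal on `P_κ(λ)`. -/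
def plusOf (κ lam : Cardinal.{0}) (Hm : Set (Set (Set Ordinal.{0}))) :
    Set (Set (Set Ordinal.{0})) :=
  {A | A ⊆ smallSet κ lam ∧ A ∉ Hm}

/-- `H⁺`. -/
def IdealP.plus {κ lam : Cardinal.{0}} (H : IdealP κ lam) : Set (Set (Set Ordinal.{0})) :=
  plusOf κ lam H.mem

/-- `cof(H)`. -/
def IdealP.cof {κ lam : Cardinal.{0}} (H : IdealP κ lam) : Cardinal.{0} :=
  leastCard fun X : Set (Set (Set Ordinal.{0})) =>
    X ⊆ H.mem ∧ ∀ A, A ∈ H.mem ↔ ∃ B ∈ X, A ⊆ B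

/-- `cof̄(H)`. -/
def IdealP.cofBar {κ lam : Cardinal.{0}} (H : IdealP κ lam) : Cardinal.{0} :=
  leastCard fun X : Set (Set (Set Ordinal.{0})) =>
    X ⊆ H.mem ∧ ∀ A ∈ H.mem, ∃ x ⊆ X, #x < Cardinal.lift.{1} κ ∧ A ⊆ ⋃₀ x

/-- `d^κ_{κ,λ}`. -/
def domP (κ lam : Cardinal.{0}) : Cardinal.{0} :=
  leastCard fun F : Set (Ordinal.{0} → Set Ordinal.{0}) =>
    (∀ f ∈ F, ∀ α < κ.ord, f α ∈ smallSet κ lam) ∧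
    ∀ g : Ordinal.{0} → Set Ordinal.{0}, (∀ α < κ.ord, g α ∈ smallSet κ lam) →
      ∃ f ∈ F, ∀ α < κ.ord, g α ⊆ f α

/-- A maximal almost disjoint family of size `≥ κ` for `H` (a member of `M_H^{≥κ}`). -/
def IsMad {κ lam : Cardinal.{0}} (H : IdealP κ lam) (Q : Set (Set (Set Ordinal.{0}))) : Prop :=
  Q ⊆ H.plus ∧ Cardinal.lift.{1} κ ≤ #Q ∧
  (∀ A ∈ Q, ∀ B ∈ Q, A ≠ B → A ∩ B ∈ H.mem) ∧
  ∀ C ∈ H.plus, ∃ A ∈ Q, A ∩ C ∈ H.plus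

/-- The (small) cardinal `c` with `lift c = c'`, used to pull `λ^{<κ} = |P_κ(λ)|` down. -/
def downCard (c : Cardinal.{1}) : Cardinal.{0} :=
  sInf {d : Cardinal.{0} | Cardinal.lift.{1} d = c}

open Classical in
/-- The number `a_H`. -/
def aNum {κ lam : Cardinal.{0}} (H : IdealP κ lam) : Cardinal.{0} :=
  if ∃ Q, IsMad H Q then sInf {c | ∃ Q, IsMad H Q ∧ Cardinal.lift.{1} c = #Q}
  else 2 ^ Order.succ (downCard #(smallSet κ lam))

/-- Weak `π`-point. -/
def WeakPiPoint {κ lam : Cardinal.{0}} (H : IdealP κ lam) : Prop :=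
  ∀ f : Ordinal.{0} → Set (Set Ordinal.{0}), (∀ α < κ.ord, f α ∈ H.mem) →
    ∀ A ∈ H.plus, ∃ B ∈ H.plus, B ⊆ A ∧ ∀ α < κ.ord, B ∩ f α ∈ Ikl κ lam

/-- `∪(a ∩ κ)`. -/
def supK (κ : Cardinal.{0}) (a : Set Ordinal.{0}) : Ordinal.{0} :=
  sSup (a ∩ Iio κ.ord)

/-- The relation `a ≺ b`. -/
def prec (κ : Cardinal.{0}) (a b : Set Ordinal.{0}) : Prop :=
  a ⊆ b ∧ supK κ a < supK κ b

/-- `[A]_κ²`. -/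
def pairsK (κ : Cardinal.{0}) (A : Set (Set Ordinal.{0})) : Set (Ordinal.{0} × Set Ordinal.{0}) :=
  {p | ∃ a ∈ A, ∃ b ∈ A, supK κ a < supK κ b ∧ p = (supK κ a, b)}

/-- `[A]_≺²`. -/
def pairsPrec (κ : Cardinal.{0}) (A : Set (Set Ordinal.{0})) :
    Set (Ordinal.{0} × Set Ordinal.{0}) :=
  {p | ∃ a ∈ A, ∃ b ∈ A, prec κ a b ∧ p = (supK κ a, b)}

/-- `[A]_{κ,κ}²`. -/
def pairsKK (κ : Cardinal.{0}) (A : Set (Set Ordinal.{0})) : Set (Ordinal.{0} × Ordinal.{0}) :=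
  {p | ∃ a ∈ A, ∃ b ∈ A, supK κ a < supK κ b ∧ p = (supK κ a, supK κ b)}

/-- `S` is a set of ordinals of order type `α`. -/
def OrdType (S : Set Ordinal.{0}) (α : Ordinal.{0}) : Prop :=
  ∃ e : Ordinal.{0} → Ordinal.{0},
    (∀ i < α, ∀ j < α, i < j → e i < e j) ∧ e '' Iio α = S

/-- `(B, ≺)` has order type `α`. -/
def OrdTypePrec (κ : Cardinal.{0}) (B : Set (Set Ordinal.{0})) (α : Ordinal.{0}) : Prop :=
  ∃ e : Ordinal.{0} → Set Ordinal.{0},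
    (∀ i < α, ∀ j < α, i < j → prec κ (e i) (e j)) ∧ e '' Iio α = B

/-- The partition relation `κ → (κ, θ)²`. -/
def ArrowKTheta (κ : Cardinal.{0}) (θ : Ordinal.{0}) : Prop :=
  ∀ f : Ordinal.{0} → Ordinal.{0} → Fin 2, ∃ A ⊆ Iio κ.ord,
    (OrdType A κ.ord ∧ ∀ α ∈ A, ∀ β ∈ A, α < β → f α β = 0) ∨
    (OrdType A θ ∧ ∀ α ∈ A, ∀ β ∈ A, α < β → f α β = 1)

/-- `κ` is weakly compact. -/
def WeaklyCompact (κ : Cardinal.{0}) : Prop :=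
  ∀ f : Ordinal.{0} → Ordinal.{0} → Fin 2, ∃ A ⊆ Iio κ.ord,
    OrdType A κ.ord ∧ ∃ i, ∀ α ∈ A, ∀ β ∈ A, α < β → f α β = i

/-- The partition relation `J⁺ → (J⁺, α)²` for an ideal on `κ`. -/
def ArrowJ {κ : Cardinal.{0}} (J : IdealK κ) (α : Ordinal.{0}) : Prop :=
  ∀ A ∈ J.plus, ∀ f : Ordinal.{0} → Ordinal.{0} → Fin 2,
    ∃ B ⊆ A, (B ∈ J.plus ∧ ∀ β ∈ B, ∀ γ ∈ B, β < γ → f β γ = 0) ∨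
             (OrdType B α ∧ ∀ β ∈ B, ∀ γ ∈ B, β < γ → f β γ = 1)

/-- The square bracket relation `J⁺ → [J⁺]_ρ²` for an ideal on `κ`. -/
def SqBrJ {κ : Cardinal.{0}} (J : IdealK κ) (ρ : Cardinal.{0}) : Prop :=
  ∀ A ∈ J.plus, ∀ f : Ordinal.{0} → Ordinal.{0} → Ordinal.{0},
    (∀ β ∈ A, ∀ γ ∈ A, β < γ → f β γ < ρ.ord) →
    ∃ B ∈ J.plus, B ⊆ A ∧ {ξ | ∃ β ∈ B, ∃ γ ∈ B, β < γ ∧ f β γ = ξ} ≠ Iio ρ.ord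

/-- `H⁺ →_κ (H⁺, α)²`. -/
def ArrowP (κ lam : Cardinal.{0}) (Hm : Set (Set (Set Ordinal.{0}))) (α : Ordinal.{0}) : Prop :=
  ∀ F : Ordinal.{0} → Set Ordinal.{0} → Fin 2, ∀ A ∈ plusOf κ lam Hm,
    ∃ B ⊆ A, (B ∈ plusOf κ lam Hm ∧ ∀ p ∈ pairsK κ B, F p.1 p.2 = 0) ∨
             (OrdTypePrec κ B α ∧ ∀ p ∈ pairsK κ B, F p.1 p.2 = 1)

/-- `H⁺ →_{κ,κ} (H⁺, α)²`. -/
def ArrowPKK (κ lam : Cardinal.{0}) (Hm : Set (Set (Set Ordinal.{0}))) (α : Ordinal.{0}) : Prop :=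
  ∀ F : Ordinal.{0} → Ordinal.{0} → Fin 2, ∀ A ∈ plusOf κ lam Hm,
    ∃ B ⊆ A, (B ∈ plusOf κ lam Hm ∧ ∀ p ∈ pairsKK κ B, F p.1 p.2 = 0) ∨
             (OrdTypePrec κ B α ∧ ∀ p ∈ pairsKK κ B, F p.1 p.2 = 1)

/-- `H⁺ →_{κ,κ} (H⁺; α)²`. -/
def ArrowPKKsemi (κ lam : Cardinal.{0}) (Hm : Set (Set (Set Ordinal.{0}))) (α : Ordinal.{0}) :
    Prop :=
  ∀ F : Ordinal.{0} → Ordinal.{0} → Fin 2, ∀ A ∈ plusOf κ lam Hm,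
    ∃ B ⊆ A, (B ∈ plusOf κ lam Hm ∧ ∀ p ∈ pairsKK κ B, F p.1 p.2 = 0) ∨
             (OrdType {o | ∃ a ∈ B, supK κ a = o} α ∧ ∀ p ∈ pairsKK κ B, F p.1 p.2 = 1)

/-- `H⁺ →_κ (H⁺)²`. -/
def ArrowPConst (κ lam : Cardinal.{0}) (Hm : Set (Set (Set Ordinal.{0}))) : Prop :=
  ∀ F : Ordinal.{0} → Set Ordinal.{0} → Fin 2, ∀ A ∈ plusOf κ lam Hm,
    ∃ B ∈ plusOf κ lam Hm, B ⊆ A ∧ ∃ i, ∀ p ∈ pairsK κ B, F p.1 p.2 = i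

/-- `H⁺ →_{κ,κ} [H⁺]_ρ²`. -/
def SqBrPKK (κ lam : Cardinal.{0}) (Hm : Set (Set (Set Ordinal.{0}))) (ρ : Cardinal.{0}) : Prop :=
  ∀ F : Ordinal.{0} → Ordinal.{0} → Ordinal.{0},
    (∀ α β : Ordinal.{0}, α < β → β < κ.ord → F α β < ρ.ord) →
    ∀ A ∈ plusOf κ lam Hm, ∃ B ∈ plusOf κ lam Hm, B ⊆ A ∧
      {ξ | ∃ p ∈ pairsKK κ B, F p.1 p.2 = ξ} ≠ Iio ρ.ord

/-- The class `K(κ,λ)`. -/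
def Kset (κ lam : Cardinal.{0}) : Set Cardinal.{0} :=
  {σ | lam ≤ σ ∧ ∃ T ⊆ smallSet κ lam, Cardinal.lift.{1} σ = #T ∧
    ∀ a ∈ smallSet κ lam, #{t ∈ T | t ⊆ a} < Cardinal.lift.{1} κ}

end

end PaperFormal

namespace PaperFormal

/-!
Given a colouring `F` of a cofinal set, weak compactness of `κ` yields a decreasing `κ`-sequence of
cofinal sets `A γ` on which, for `α < γ`, the colour of `(α, b)` depends on `α` only, say it is
`φ α`, while `φ (∪(b ∩ κ))` is constant. A diagonal intersection of this sequence is homogeneous;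
guided by a point of `^κ2` that is generic for `λ^{<κ}` many dense open sets, it is also cofinal.

Conversely, (iii) implies that `κ` is weakly compact, hence a strong limit. Index at most `λ^{<κ}`
many dense open sets by elements `e` of `P_κ(λ)`. Cofinally many `b` have a largest ordinal below
`κ`, which codes a bounded `0`-`1` sequence forcing every point that contains it into all the dense
open sets with `e ⊆ b`. By (iii) some cofinal family of such `b` has its sequences on disjoint
intervals, and pasting these together gives a point in all the dense open sets.
-/

section Regular

variable {κ : Cardinal.{0}}

theorem mk_Iio_ord (κ : Cardinal.{0}) : #(Iio κ.ord) = Cardinal.lift.{1} κ := by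
  rw [mk_Iio_ordinal, card_ord]

theorem mk_Iio_lt_lift {δ : Ordinal.{0}} (hδ : δ < κ.ord) : #(Iio δ) < Cardinal.lift.{1} κ := by
  rw [mk_Iio_ordinal, Cardinal.lift_lt]
  exact Cardinal.lt_ord.1 hδ

theorem mk_lt_lift_of_forall_le {δ : Ordinal.{0}} (hκ : ℵ₀ ≤ κ) (hδ : δ < κ.ord)
    {s : Set Ordinal.{0}} (hs : ∀ α ∈ s, α ≤ δ) : #s < Cardinal.lift.{1} κ :=
  (mk_le_mk_of_subset fun _ hα => Order.lt_succ_of_le (hs _ hα)).trans_lt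
    (mk_Iio_lt_lift ((Cardinal.isSuccLimit_ord hκ).succ_lt hδ))

theorem exists_ord_forall_lt (hreg : κ.IsRegular) {ι : Type 1} (hι : #ι < Cardinal.lift.{1} κ)
    {f : ι → Ordinal.{0}} (hf : ∀ i, f i < κ.ord) : ∃ δ < κ.ord, ∀ i, f i < δ := by
  have hcof : #(range f) < (Ordinal.lift.{1} κ.ord).cof := by
    rw [← Ordinal.lift_cof, hreg.cof_ord]
    exact mk_range_le.trans_lt hι
  have hlt := Ordinal.sSup_add_one_lt_of_lt_cof hcof (forall_mem_range.2 hf)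
  refine ⟨_, hlt, fun i => ?_⟩
  have hbdd : BddAbove ((· + 1) '' range f) :=
    ⟨κ.ord, by rintro _ ⟨_, ⟨i, rfl⟩, rfl⟩; exact Order.add_one_le_of_lt (hf i)⟩
  exact (lt_add_one (f i)).trans_le (le_csSup hbdd ⟨_, ⟨i, rfl⟩, rfl⟩)

theorem exists_ord_forall_mem_lt (hreg : κ.IsRegular) {a : Set Ordinal.{0}}
    (ha : #a < Cardinal.lift.{1} κ) (haκ : a ⊆ Iio κ.ord) : ∃ δ < κ.ord, ∀ α ∈ a, α < δ := by
  simpa only [Subtype.forall] using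
    exists_ord_forall_lt hreg ha (f := Subtype.val) fun α => haκ α.2

theorem exists_code_unbounded (hκ : ℵ₀ ≤ κ) {X : Type 1} [Nonempty X]
    (hX : #X ≤ Cardinal.lift.{1} κ) :
    ∃ d : Ordinal.{0} → X, ∀ z, ∀ β < κ.ord, ∃ c < κ.ord, β < c ∧ d c = z := by
  have hprod : #(X × Iio κ.ord) ≤ #(Iio κ.ord) := by
    rw [← Cardinal.mul_def, mk_Iio_ord]
    exact Cardinal.mul_le_of_le (Cardinal.aleph0_le_lift.2 hκ) hX le_rfl
  obtain ⟨g⟩ := (Cardinal.le_def _ _).1 hprod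
  let e : X × Iio κ.ord → Ordinal.{0} := fun p => g p
  have he : Function.Injective e := Subtype.val_injective.comp g.injective
  refine ⟨Function.extend e Prod.fst fun _ => Classical.arbitrary X, fun z β hβ => ?_⟩
  by_contra! hbdd
  have hfibre : ∀ η, e (z, η) ≤ β := fun η => by
    by_contra! hlt
    exact hbdd _ (g (z, η)).2 hlt (he.extend_apply _ _ _)
  refine (mk_lt_lift_of_forall_le hκ hβ (forall_mem_range.2 hfibre)).ne ?_
  rw [Cardinal.mk_range_eq _ fun η η' h => (Prod.mk.inj (he h)).2, mk_Iio_ord]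

end Regular

section OrdType

variable {κ : Cardinal.{0}} {S : Set Ordinal.{0}}

theorem OrdType.exists_ge {α β : Ordinal.{0}} (hS : OrdType S α) (hβ : β < α) :
    ∃ s ∈ S, β ≤ s := by
  obtain ⟨e, he, rfl⟩ := hS
  refine ⟨e β, mem_image_of_mem e hβ, ?_⟩
  induction β using WellFoundedLT.induction with
  | ind β ih =>
    by_contra! hlt
    exact (ih _ hlt (hlt.trans hβ)).not_gt (he _ (hlt.trans hβ) _ hβ hlt)

theorem ordType_ord_iff (hreg : κ.IsRegular) (hS : S ⊆ Iio κ.ord) :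
    OrdType S κ.ord ↔ ∀ β < κ.ord, ∃ s ∈ S, β < s := by
  refine ⟨fun h β hβ => ?_, fun h => ?_⟩
  · obtain ⟨s, hs, hβs⟩ := h.exists_ge ((Cardinal.isSuccLimit_ord hreg.aleph0_le).succ_lt hβ)
    exact ⟨s, hs, Order.succ_le_iff.1 hβs⟩
  -- `enumOrd` enumerates proper classes only.
  set T := S ∪ Ici κ.ord
  have hT : ¬ BddAbove T := fun hb =>
    Ordinal.not_bddAbove_compl_of_small (Iio κ.ord) (hb.mono fun _ hα => Or.inr (notMem_Iio.1 hα))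
  have hlt : ∀ i < κ.ord, Ordinal.enumOrd T i < κ.ord := fun i => by
    induction i using WellFoundedLT.induction with
    | ind i ih =>
      intro hi
      obtain ⟨δ, hδ, hδi⟩ := exists_ord_forall_lt hreg (mk_Iio_lt_lift hi)
        (f := fun j : Iio i => Ordinal.enumOrd T j) fun j => ih j j.2 (j.2.trans hi)
      obtain ⟨s, hs, hδs⟩ := h δ hδ
      exact (Ordinal.enumOrd_le_of_forall_lt (Or.inl hs)
        fun j hj => (hδi ⟨j, hj⟩).trans hδs).trans_lt (hS hs)
  refine ⟨Ordinal.enumOrd T, fun i _ j _ hij => Ordinal.enumOrd_strictMono hT hij,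
    Subset.antisymm ?_ fun s hs => ?_⟩
  · rintro _ ⟨i, hi, rfl⟩
    exact (Ordinal.enumOrd_mem hT i).resolve_right (hlt i hi).not_ge
  · obtain ⟨i, rfl⟩ := Ordinal.enumOrd_surjective hT (Or.inl hs)
    exact ⟨i, (Ordinal.le_enumOrd_self hT).trans_lt (hS hs), rfl⟩

end OrdType

section SmallSet

variable {κ lam : Cardinal.{0}} {a : Set Ordinal.{0}} {α : Ordinal.{0}}

theorem ord_lt_of_le (hle : κ ≤ lam) (hα : α < κ.ord) : α < lam.ord :=
  hα.trans_le (Cardinal.ord_le_ord.2 hle)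

theorem le_supK (ha : α ∈ a) (hα : α < κ.ord) : α ≤ supK κ a :=
  le_csSup ⟨κ.ord, fun _ h => h.2.le⟩ ⟨ha, hα⟩

theorem supK_le (h : ∀ β ∈ a, β < κ.ord → β ≤ α) : supK κ a ≤ α :=
  csSup_le' fun β hβ => h β hβ.1 hβ.2

theorem supK_lt (hreg : κ.IsRegular) (ha : #a < Cardinal.lift.{1} κ) : supK κ a < κ.ord := by
  obtain ⟨δ, hδ, haδ⟩ := exists_ord_forall_mem_lt hreg
    ((mk_le_mk_of_subset inter_subset_left).trans_lt ha) (inter_subset_right (s := a))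
  exact (supK_le fun β hβ hβκ => (haδ β ⟨hβ, hβκ⟩).le).trans_lt hδ

theorem supK_insert (hα : α < κ.ord) (h : ∀ β ∈ a, β < κ.ord → β ≤ α) :
    supK κ (insert α a) = α :=
  (supK_le (forall_mem_insert.2 ⟨fun _ => le_rfl, h⟩)).antisymm (le_supK (mem_insert α a) hα)

theorem empty_mem_smallSet (hκ : κ ≠ 0) : ∅ ∈ smallSet κ lam :=
  ⟨empty_subset _, by
    simpa only [Cardinal.mk_eq_zero, pos_iff_ne_zero, ne_eq, Cardinal.lift_eq_zero]⟩

theorem insert_mem_smallSet (hκ : ℵ₀ ≤ κ) (ha : a ∈ smallSet κ lam) (hα : α < lam.ord) :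
    insert α a ∈ smallSet κ lam :=
  ⟨insert_subset hα ha.1, mk_insert_le.trans_lt <|
    Cardinal.add_lt_of_lt (Cardinal.aleph0_le_lift.2 hκ) ha.2
      (one_lt_aleph0.trans_le (Cardinal.aleph0_le_lift.2 hκ))⟩

theorem singleton_mem_smallSet (hκ : ℵ₀ ≤ κ) (hα : α < lam.ord) : {α} ∈ smallSet κ lam := by
  simpa only [insert_empty_eq] using
    insert_mem_smallSet hκ (empty_mem_smallSet (aleph0_pos.trans_le hκ).ne') hα

theorem iUnion_mem_smallSet (hreg : κ.IsRegular) {ι : Type 1} (hι : #ι < Cardinal.lift.{1} κ)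
    {e : ι → Set Ordinal.{0}} (he : ∀ i, e i ∈ smallSet κ lam) : ⋃ i, e i ∈ smallSet κ lam :=
  ⟨iUnion_subset fun i => (he i).1,
    (Cardinal.card_iUnion_lt_iff_forall_of_isRegular hreg.lift hι).2 fun i => (he i).2⟩

theorem lift_le_mk_smallSet (hκ : ℵ₀ ≤ κ) (hle : κ ≤ lam) :
    Cardinal.lift.{1} κ ≤ #(smallSet κ lam) := by
  rw [← mk_Iio_ord]
  exact Cardinal.mk_le_of_injective
    (f := fun α : Iio κ.ord => ⟨{α.1}, singleton_mem_smallSet hκ (ord_lt_of_le hle α.2)⟩)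
    fun α β h => Subtype.ext (singleton_injective (Subtype.mk.inj h))

end SmallSet

/-- The collection `I_{κ,λ}⁺` of cofinal subsets of `P_κ(λ)`. -/
abbrev Iplus (κ lam : Cardinal.{0}) : Set (Set (Set Ordinal.{0})) := plusOf κ lam (Ikl κ lam)

section Cofinal

variable {κ lam : Cardinal.{0}} {A B : Set (Set Ordinal.{0})}

theorem mem_Iplus_iff :
    A ∈ Iplus κ lam ↔ A ⊆ smallSet κ lam ∧ ∀ a ∈ smallSet κ lam, ∃ b ∈ A, a ⊆ b := by
  simp only [Iplus, plusOf, Ikl, mem_ofPred_eq, not_and, not_exists, not_forall, not_not,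
    exists_prop]
  exact and_congr_right fun hA => ⟨fun h => h hA, fun h _ => h⟩

theorem Iplus_mono (hA : A ∈ Iplus κ lam) (hAB : A ⊆ B) (hB : B ⊆ smallSet κ lam) :
    B ∈ Iplus κ lam :=
  mem_Iplus_iff.2 ⟨hB, fun a ha =>
    let ⟨b, hb, hab⟩ := (mem_Iplus_iff.1 hA).2 a ha
    ⟨b, hAB hb, hab⟩⟩

theorem smallSet_mem_Iplus : smallSet κ lam ∈ Iplus κ lam :=
  mem_Iplus_iff.2 ⟨Subset.rfl, fun a ha => ⟨a, ha, Subset.rfl⟩⟩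

theorem exists_fiber_mem_Iplus (hreg : κ.IsRegular) {ι : Type 1}
    (hι : #ι < Cardinal.lift.{1} κ) (f : Set Ordinal.{0} → ι) (hA : A ∈ Iplus κ lam) :
    ∃ i, {b ∈ A | f b = i} ∈ Iplus κ lam := by
  rw [mem_Iplus_iff] at hA
  by_contra! h
  have hbad : ∀ i, ∃ e ∈ smallSet κ lam, ∀ b ∈ A, f b = i → ¬ e ⊆ b := fun i => by
    by_contra! hi
    refine h i (mem_Iplus_iff.2 ⟨(sep_subset _ _).trans hA.1, fun e he => ?_⟩)
    obtain ⟨b, hbA, hbi, heb⟩ := hi e he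
    exact ⟨b, ⟨hbA, hbi⟩, heb⟩
  choose e he hbad using hbad
  obtain ⟨b, hb, heb⟩ := hA.2 _ (iUnion_mem_smallSet hreg hι he)
  exact hbad (f b) b hb rfl ((subset_iUnion e _).trans heb)

theorem exists_mem_le_supK (hκ : ℵ₀ ≤ κ) (hle : κ ≤ lam) (hA : A ∈ Iplus κ lam)
    {a : Set Ordinal.{0}} (ha : a ∈ smallSet κ lam) {β : Ordinal.{0}} (hβ : β < κ.ord) :
    ∃ b ∈ A, a ⊆ b ∧ β ≤ supK κ b := by
  obtain ⟨b, hb, hab⟩ :=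
    (mem_Iplus_iff.1 hA).2 _ (insert_mem_smallSet hκ ha (ord_lt_of_le hle hβ))
  exact ⟨b, hb, (subset_insert _ _).trans hab, le_supK (hab (mem_insert _ _)) hβ⟩

theorem supK_image_subset (hreg : κ.IsRegular) (hA : A ⊆ smallSet κ lam) :
    supK κ '' A ⊆ Iio κ.ord :=
  image_subset_iff.2 fun _ ha => supK_lt hreg (hA ha).2

theorem ordType_supK_image (hreg : κ.IsRegular) (hle : κ ≤ lam) (hA : A ∈ Iplus κ lam) :
    OrdType (supK κ '' A) κ.ord := by
  have hlim := Cardinal.isSuccLimit_ord hreg.aleph0_le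
  refine (ordType_ord_iff hreg (supK_image_subset hreg (mem_Iplus_iff.1 hA).1)).2 fun β hβ => ?_
  obtain ⟨b, hb, -, hβb⟩ := exists_mem_le_supK hreg.aleph0_le hle hA
    (empty_mem_smallSet hreg.ne_zero) (hlim.succ_lt hβ)
  exact ⟨_, mem_image_of_mem _ hb, Order.succ_le_iff.1 hβb⟩

end Cofinal

theorem exists_forall_ge_eq_of_monotoneOn {ι L : Type*} [Preorder ι] [PartialOrder L]
    [WellFoundedGT L] {f : ι → L} {A : Set ι} (hA : A.Nonempty) (hf : MonotoneOn f A) :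
    ∃ a₀ ∈ A, ∀ a ∈ A, a₀ ≤ a → f a = f a₀ := by
  obtain ⟨a₀, ha₀, hmax⟩ := exists_maximalFor_of_wellFoundedGT (· ∈ A) f hA
  exact ⟨a₀, ha₀, fun a ha h => (hmax ha (hf ha₀ ha h)).antisymm (hf ha₀ ha h)⟩

section WeaklyCompact

variable {κ : Cardinal.{0}}

/-- `φ` is the limit of the `κ`-sequence `s` along `A`, for the topology on functions on `κ` whose
basic open sets prescribe the values on an initial segment. -/
def ConvergesAlong {L : Type*} (κ : Cardinal.{0}) (A : Set Ordinal.{0})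
    (s : Ordinal.{0} → Ordinal.{0} → L) (φ : Ordinal.{0} → L) : Prop :=
  ∀ γ < κ.ord, ∃ δ < κ.ord, ∀ α ∈ A, δ ≤ α → ∀ β < γ, s α β = φ β

theorem exists_convergesAlong_of_forall_le (hreg : κ.IsRegular) {L : Type*} [PartialOrder L]
    [WellFoundedGT L] {A : Set Ordinal.{0}} (hAκ : A ⊆ Iio κ.ord) (hA : OrdType A κ.ord)
    {s : Ordinal.{0} → Ordinal.{0} → L}
    (hs : ∀ α ∈ A, ∀ α' ∈ A, α < α' → ∀ β, (∀ ξ < β, s α ξ = s α' ξ) → s α β ≤ s α' β) :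
    ∃ φ, ConvergesAlong κ A s φ := by
  have hpt : ∀ β < κ.ord, ∃ δ < κ.ord, ∃ v, ∀ α ∈ A, δ ≤ α → s α β = v := fun β => by
    induction β using WellFoundedLT.induction with
    | ind β ih =>
      intro hβ
      have ih' : ∀ ξ : Iio β, ∃ δ < κ.ord, ∃ v, ∀ α ∈ A, δ ≤ α → s α ξ = v :=
        fun ξ => ih ξ ξ.2 (ξ.2.trans hβ)
      choose δ hδ v hv using ih'
      obtain ⟨ε, hε, hδε⟩ := exists_ord_forall_lt hreg (mk_Iio_lt_lift hβ) hδ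
      obtain ⟨α₁, hα₁, hεα₁⟩ := hA.exists_ge hε
      have hmono : MonotoneOn (s · β) (A ∩ Ici ε) := fun α hα α' hα' hαα' => by
        rcases hαα'.eq_or_lt with rfl | hlt
        · exact le_rfl
        · exact hs α hα.1 α' hα'.1 hlt β fun ξ hξ =>
            (hv ⟨ξ, hξ⟩ α hα.1 ((hδε _).le.trans hα.2)).trans
              (hv ⟨ξ, hξ⟩ α' hα'.1 ((hδε _).le.trans hα'.2)).symm
      obtain ⟨α₀, hα₀, hconst⟩ := exists_forall_ge_eq_of_monotoneOn
        (nonempty_of_mem (mem_inter hα₁ hεα₁)) hmono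
      exact ⟨α₀, hAκ hα₀.1, _, fun α hα h => hconst α ⟨hα, hα₀.2.trans h⟩ h⟩
  have : Nonempty L := ⟨s 0 0⟩
  choose! δ hδ φ hφ using hpt
  refine ⟨φ, fun γ hγ => ?_⟩
  obtain ⟨ε, hε, hδε⟩ := exists_ord_forall_lt hreg (mk_Iio_lt_lift hγ)
    (f := fun β : Iio γ => δ β) fun β => hδ β (β.2.trans hγ)
  exact ⟨ε, hε, fun α hα h β hβ => hφ β (hβ.trans hγ) α hα ((hδε ⟨β, hβ⟩).le.trans h)⟩

theorem WeaklyCompact.exists_convergesAlong (hwc : WeaklyCompact κ) (hreg : κ.IsRegular)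
    {L : Type*} [LinearOrder L] [Finite L] (s : Ordinal.{0} → Ordinal.{0} → L) :
    ∃ A ⊆ Iio κ.ord, OrdType A κ.ord ∧ ∃ φ, ConvergesAlong κ A s φ := by
  classical
  let up (α α' : Ordinal.{0}) : Prop := ∀ β, (∀ ξ < β, s α ξ = s α' ξ) → s α β ≤ s α' β
  obtain ⟨A, hAκ, hA, i, hi⟩ := hwc fun α α' => if up α α' then 0 else 1
  refine ⟨A, hAκ, hA, ?_⟩
  by_cases hi0 : i = 0
  · refine exists_convergesAlong_of_forall_le hreg hAκ hA fun α hα α' hα' hlt => ?_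
    by_contra hup
    have hup : ¬ up α α' := hup
    simpa only [if_neg hup, hi0, one_ne_zero] using hi α hα α' hα' hlt
  · refine exists_convergesAlong_of_forall_le (L := Lᵒᵈ) hreg hAκ hA
      fun α hα α' hα' hlt β hβ => ?_
    have hup : ¬ up α α' := fun hup => hi0 <| by
      simpa only [if_pos hup] using (hi α hα α' hα' hlt).symm
    simp only [up, not_forall, not_le] at hup
    obtain ⟨ξ, hξ, hdrop⟩ := hup
    -- `ξ` is the first place where `s α` and `s α'` differ.
    rcases lt_trichotomy β ξ with h | rfl | h
    · exact (hξ β h).ge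
    · exact hdrop.le
    · exact absurd (hβ ξ h) hdrop.ne'

theorem WeaklyCompact.isStrongLimit (hwc : WeaklyCompact κ) (hreg : κ.IsRegular) :
    κ.IsStrongLimit := by
  refine ⟨hreg.ne_zero, fun μ hμ => ?_⟩
  by_contra! hle
  have hpow : #(Iio κ.ord) ≤ #(𝒫 (Iio μ.ord)) := by
    rw [mk_Iio_ord, mk_powerset, mk_Iio_ord, ← Cardinal.lift_two_power, Cardinal.lift_le]
    exact hle
  obtain ⟨g⟩ := (Cardinal.le_def _ _).1 hpow
  obtain ⟨A, hAκ, hA, φ, hφ⟩ :=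
    hwc.exists_convergesAlong hreg fun α β => ∃ hα : α < κ.ord, β ∈ (g ⟨α, hα⟩).1
  obtain ⟨δ, hδ, hconv⟩ := hφ μ.ord (Cardinal.ord_lt_ord.2 hμ)
  have hunb := (ordType_ord_iff hreg hAκ).1 hA
  obtain ⟨α, hα, hδα⟩ := hunb δ hδ
  obtain ⟨α', hα', hαα'⟩ := hunb α (hAκ hα)
  have heq : g ⟨α, hAκ hα⟩ = g ⟨α', hAκ hα'⟩ := Subtype.ext <| Set.ext fun β => by
    by_cases hβ : β < μ.ord
    · have h := (hconv α hα hδα.le β hβ).trans (hconv α' hα' (hδα.trans hαα').le β hβ).symm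
      simpa only [exists_prop_of_true (mem_Iio.1 (hAκ hα)),
        exists_prop_of_true (mem_Iio.1 (hAκ hα')), eq_iff_iff] using h
    · exact iff_of_false (fun h => hβ ((g _).2 h)) fun h => hβ ((g _).2 h)
  exact hαα'.ne (Subtype.mk.inj (g.injective heq))

theorem WeaklyCompact.exists_branch (hwc : WeaklyCompact κ) (hreg : κ.IsRegular)
    {L : Type*} [LinearOrder L] [Finite L] {P : Ordinal.{0} → (Ordinal.{0} → L) → Prop}
    (hP : ∀ γ γ' s t, γ ≤ γ' → (∀ β < γ, s β = t β) → P γ' s → P γ t)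
    (hne : ∀ γ < κ.ord, ∃ s, P γ s) : ∃ φ, ∀ γ < κ.ord, P γ φ := by
  have : Nonempty L := let ⟨s, _⟩ := hne 0 hreg.ord_pos; ⟨s 0⟩
  choose! s hs using hne
  obtain ⟨A, hAκ, hA, φ, hφ⟩ := hwc.exists_convergesAlong hreg s
  refine ⟨φ, fun γ hγ => ?_⟩
  obtain ⟨δ, hδ, hconv⟩ := hφ γ hγ
  obtain ⟨α, hα, hle⟩ := hA.exists_ge (max_lt hγ hδ)
  exact hP γ α (s α) φ ((le_max_left _ _).trans hle)
    (hconv α hα ((le_max_right _ _).trans hle)) (hs α (hAκ hα))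

end WeaklyCompact

section Cov

variable {ν ρ : Cardinal.{0}} {D : Set (Set Ordinal.{0})}

theorem denseOpen_cantor_sdiff_singleton (hν : ℵ₀ ≤ ν) (hνρ : ν ≤ ρ) {x : Set Ordinal.{0}}
    (hx : x ∈ cantor ρ) : DenseOpen ν ρ (cantor ρ \ {x}) := by
  refine ⟨sdiff_subset, fun y ⟨hy, hyx⟩ => ?_, fun a t ⟨ha, hta, hcard⟩ => ?_⟩
  · obtain ⟨δ, hδ⟩ : ∃ δ, ¬ (δ ∈ y ↔ δ ∈ x) := not_forall.1 fun h => hyx (Set.ext h)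
    have hδρ : δ < ρ.ord := by
      by_contra hδρ
      exact hδ (iff_of_false (fun h => hδρ (hy h)) fun h => hδρ (hx h))
    refine ⟨{δ}, y ∩ {δ}, ⟨singleton_subset_iff.2 hδρ, inter_subset_right, ?_⟩, ⟨hy, rfl⟩,
      fun z ⟨hz, hzy⟩ => ⟨hz, ?_⟩⟩
    · rw [mk_singleton]
      exact one_lt_aleph0.trans_le (Cardinal.aleph0_le_lift.2 hν)
    · rintro rfl
      exact hδ (by simpa using (Set.ext_iff.1 hzy δ).symm)
  · obtain ⟨δ, hδρ, hδa⟩ : ∃ δ < ρ.ord, δ ∉ a := by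
      by_contra! h
      refine ((mk_le_mk_of_subset (show Iio ρ.ord ⊆ a from h)).trans_lt hcard).not_ge ?_
      rw [mk_Iio_ord, Cardinal.lift_le]
      exact hνρ
    have htρ : t ⊆ Iio ρ.ord := hta.trans ha
    have hδt : δ ∉ t := fun h => hδa (hta h)
    by_cases hδx : δ ∈ x
    · exact ⟨t, ⟨htρ, inter_eq_left.2 hta⟩, htρ, fun h => hδt (h ▸ hδx)⟩
    · refine ⟨insert δ t, ⟨insert_subset hδρ htρ, ?_⟩, insert_subset hδρ htρ,
        fun h => hδx (h ▸ mem_insert δ t)⟩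
      rw [insert_inter_of_notMem hδa, inter_eq_left.2 hta]

theorem DenseOpen.meager_sdiff (hD : DenseOpen ν ρ D) (hν : 1 ≤ ν) :
    Meager ν ρ (cantor ρ \ D) :=
  ⟨sdiff_subset, {D}, singleton_nonempty D, by simpa only [mk_singleton, Cardinal.one_le_lift_iff],
    fun _ hD' => mem_singleton_iff.1 hD' ▸ hD, by rw [sInter_singleton, sdiff_inter_self]⟩

theorem meager_singleton (hν : ℵ₀ ≤ ν) (hνρ : ν ≤ ρ) {x : Set Ordinal.{0}}
    (hx : x ∈ cantor ρ) : Meager ν ρ {x} := by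
  simpa only [sdiff_sdiff_right_self, inf_eq_inter, inter_eq_right.2 (singleton_subset_iff.2 hx)]
    using (denseOpen_cantor_sdiff_singleton hν hνρ hx).meager_sdiff (one_le_aleph0.trans hν)

theorem exists_lift_covM_eq (hν : ℵ₀ ≤ ν) (hνρ : ν ≤ ρ) :
    ∃ Y : Set (Set (Set Ordinal.{0})), (∀ W ∈ Y, Meager ν ρ W) ∧ ⋃₀ Y = cantor ρ ∧
      Cardinal.lift.{1} (covM ν ρ) = #Y := by
  obtain ⟨Y, ⟨hY, hcov⟩, hcard⟩ := csInf_mem (s := {c : Cardinal.{0} | ∃ Y : Set (Set (Set _)),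
    ((∀ W ∈ Y, Meager ν ρ W) ∧ ⋃₀ Y = cantor ρ) ∧ Cardinal.lift.{1} c = #Y})
    ⟨2 ^ ρ, singleton '' cantor ρ, ⟨forall_mem_image.2 fun x => meager_singleton hν hνρ,
      by rw [sUnion_image, biUnion_of_singleton]⟩, by
      rw [mk_image_eq singleton_injective, Cardinal.lift_two_power, ← mk_Iio_ord, ← mk_powerset]
      rfl⟩
  exact ⟨Y, hY, hcov, hcard⟩

theorem lt_lift_covM_iff (hν : ℵ₀ ≤ ν) (hνρ : ν ≤ ρ) {c : Cardinal.{1}}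
    (hc : Cardinal.lift.{1} ν ≤ c) :
    c < Cardinal.lift.{1} (covM ν ρ) ↔ ∀ 𝒟 : Set (Set (Set Ordinal.{0})), #𝒟 ≤ c →
      (∀ D ∈ 𝒟, DenseOpen ν ρ D) → ∃ x ∈ cantor ρ, ∀ D ∈ 𝒟, x ∈ D := by
  refine ⟨fun hlt 𝒟 h𝒟 hD => ?_, fun h => ?_⟩
  · by_contra! hempty
    obtain ⟨d, hd⟩ := Cardinal.mem_range_lift_of_le
      ((mk_image_le (f := (cantor ρ \ ·)) (s := 𝒟)).trans (h𝒟.trans hlt.le))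
    have hcov : covM ν ρ ≤ d := csInf_le' ⟨(cantor ρ \ ·) '' 𝒟, ⟨forall_mem_image.2 fun D hD' =>
      (hD D hD').meager_sdiff (one_le_aleph0.trans hν), ?_⟩, hd⟩
    · rw [← Cardinal.lift_le.{1}, hd] at hcov
      exact (hcov.trans (mk_image_le.trans h𝒟)).not_gt hlt
    · refine Subset.antisymm (sUnion_subset (forall_mem_image.2 fun D _ => sdiff_subset))
        fun x hx => ?_
      obtain ⟨D, hD', hxD⟩ := hempty x hx
      exact ⟨_, mem_image_of_mem _ hD', hx, hxD⟩
  · obtain ⟨Y, hY, hcov, hcard⟩ := exists_lift_covM_eq hν hνρ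
    by_contra! hle
    choose! _ X _ hX hXdense hdisj using hY
    have hsmall : #(⋃ W : Y, X W) ≤ c := by
      refine mk_iUnion_le_sum_mk.trans ((Cardinal.sum_le_sum _ _ fun W : Y => hX W W.2).trans ?_)
      rw [Cardinal.sum_const', ← hcard]
      exact Cardinal.mul_le_of_le ((Cardinal.aleph0_le_lift.2 hν).trans hc) hle hc
    obtain ⟨x, hx, hxD⟩ := h (⋃ W : Y, X W) hsmall fun D hD =>
      let ⟨W, hW⟩ := mem_iUnion.1 hD
      hXdense W W.2 D hW
    obtain ⟨W, hW, hxW⟩ := hcov.ge hx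
    exact eq_empty_iff_forall_notMem.1 (hdisj W hW) x
      ⟨hxW, fun D hD => hxD D (mem_iUnion.2 ⟨⟨W, hW⟩, hD⟩)⟩

end Cov

section Homogeneous

variable {κ lam : Cardinal.{0}} {A : Ordinal.{0} → Set (Set Ordinal.{0})}

/-- The diagonal intersection of the sequence `A` guided by `x ⊆ κ`, from which a generic `x`
extracts a cofinal set. -/
def guidedDiagonal (κ : Cardinal.{0}) (A : Ordinal.{0} → Set (Set Ordinal.{0}))
    (x : Set Ordinal.{0}) : Set (Set Ordinal.{0}) :=
  {b ∈ A 0 | supK κ b ∈ x ∧ ∀ α ∈ x, α < supK κ b → b ∈ A (Order.succ α)}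

theorem denseOpen_exists_mem_guidedDiagonal (hreg : κ.IsRegular) (hle : κ ≤ lam)
    (hanti : Antitone A) (hA : ∀ γ < κ.ord, A γ ∈ Iplus κ lam) {e : Set Ordinal.{0}}
    (he : e ∈ smallSet κ lam) :
    DenseOpen κ κ {x ∈ cantor κ | ∃ b ∈ guidedDiagonal κ A x, e ⊆ b} := by
  have hA₀ := (mem_Iplus_iff.1 (hA 0 hreg.ord_pos)).1
  refine ⟨sep_subset _ _, fun x ⟨hx, b, ⟨hb, hbx, hbA⟩, heb⟩ => ?_,
    fun a t ⟨ha, hta, hcard⟩ => ?_⟩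
  · have hsup := supK_lt hreg (hA₀ hb).2
    refine ⟨Iic (supK κ b), _, ⟨fun α hα => (mem_Iic.1 hα).trans_lt hsup, inter_subset_right,
      mk_lt_lift_of_forall_le hreg.aleph0_le hsup fun _ => id⟩, ⟨hx, rfl⟩, fun y ⟨hy, hyx⟩ => ?_⟩
    exact ⟨hy, b, ⟨hb, (hyx.ge ⟨hbx, mem_Iic.2 le_rfl⟩).1,
      fun α hα hαb => hbA α (hyx.le ⟨hα, hαb.le⟩).1 hαb⟩, heb⟩
  · obtain ⟨δ, hδ, haδ⟩ := exists_ord_forall_mem_lt hreg hcard ha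
    obtain ⟨b, hb, heb, hδb⟩ := exists_mem_le_supK hreg.aleph0_le hle (hA δ hδ) he hδ
    have hb₀ : b ∈ A 0 := hanti bot_le hb
    have hxκ : insert (supK κ b) t ⊆ Iio κ.ord :=
      insert_subset (supK_lt hreg (hA₀ hb₀).2) (hta.trans ha)
    refine ⟨insert (supK κ b) t, ⟨hxκ, ?_⟩, hxκ, b, ⟨hb₀, mem_insert _ _, fun α hα hαb => ?_⟩, heb⟩
    · rw [insert_inter_of_notMem fun h => (haδ _ h).not_ge hδb, inter_eq_left.2 hta]
    · exact hanti (Order.succ_le_of_lt (haδ α (hta (hα.resolve_left hαb.ne)))) hb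

theorem exists_diagonal_mem_Iplus (hreg : κ.IsRegular) (hle : κ ≤ lam)
    (hcov : #(smallSet κ lam) < Cardinal.lift.{1} (covM κ κ)) (hanti : Antitone A)
    (hA : ∀ γ < κ.ord, A γ ∈ Iplus κ lam) :
    ∃ B ∈ Iplus κ lam, B ⊆ A 0 ∧
      ∀ a ∈ B, ∀ b ∈ B, supK κ a < supK κ b → b ∈ A (Order.succ (supK κ a)) := by
  have hκ := hreg.aleph0_le
  obtain ⟨x, -, hx⟩ := (lt_lift_covM_iff hκ le_rfl (lift_le_mk_smallSet hκ hle)).1 hcov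
    ((fun e => {x ∈ cantor κ | ∃ b ∈ guidedDiagonal κ A x, e ⊆ b}) '' smallSet κ lam)
    mk_image_le (forall_mem_image.2 fun e => denseOpen_exists_mem_guidedDiagonal hreg hle hanti hA)
  refine ⟨guidedDiagonal κ A x, mem_Iplus_iff.2 ⟨?_, fun e he => ?_⟩, sep_subset _ _,
    fun a ha b hb hab => hb.2.2 _ ha.2.1 hab⟩
  · exact (sep_subset _ _).trans (mem_Iplus_iff.1 (hA 0 hreg.ord_pos)).1
  · exact (hx _ (mem_image_of_mem _ he)).2

theorem exists_endHomogeneous_below (hreg : κ.IsRegular) (hκ : κ.IsStrongLimit)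
    (F : Ordinal.{0} → Set Ordinal.{0} → Fin 2) {A : Set (Set Ordinal.{0})}
    (hA : A ∈ Iplus κ lam) {γ : Ordinal.{0}} (hγ : γ < κ.ord) :
    ∃ s : Ordinal.{0} → Fin 2, {b ∈ A | ∀ β < γ, F β b = s β} ∈ Iplus κ lam := by
  have hfun : #(Iio γ → Fin 2) < Cardinal.lift.{1} κ := by
    rw [mk_arrow, mk_Iio_ordinal, mk_fin, Cardinal.lift_natCast, Nat.cast_ofNat,
      Cardinal.lift_uzero, ← Cardinal.lift_two_power, Cardinal.lift_lt]
    exact hκ.isStrongPrelimit (Cardinal.lt_ord.1 hγ)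
  obtain ⟨s, hs⟩ := exists_fiber_mem_Iplus hreg hfun (fun b β => F β b) hA
  refine ⟨Function.extend Subtype.val s 0, Iplus_mono hs (fun b hb => ⟨hb.1, fun β hβ => ?_⟩)
    ((sep_subset _ _).trans (mem_Iplus_iff.1 hA).1)⟩
  exact (congrFun hb.2 ⟨β, hβ⟩).trans (Subtype.val_injective.extend_apply s 0 ⟨β, hβ⟩).symm

theorem WeaklyCompact.exists_endHomogeneous (hwc : WeaklyCompact κ) (hreg : κ.IsRegular)
    (F : Ordinal.{0} → Set Ordinal.{0} → Fin 2) {A : Set (Set Ordinal.{0})}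
    (hA : A ∈ Iplus κ lam) :
    ∃ φ : Ordinal.{0} → Fin 2, ∃ i, ∀ γ < κ.ord,
      {b ∈ A | φ (supK κ b) = i ∧ ∀ β < γ, F β b = φ β} ∈ Iplus κ lam := by
  have hsub {p : Set Ordinal.{0} → Prop} : {b ∈ A | p b} ⊆ smallSet κ lam :=
    (sep_subset _ _).trans (mem_Iplus_iff.1 hA).1
  obtain ⟨φ, hφ⟩ := hwc.exists_branch hreg
    (P := fun γ s => {b ∈ A | ∀ β < γ, F β b = s β} ∈ Iplus κ lam)
    (fun γ γ' s t hγ hst h => Iplus_mono h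
      (fun b hb => ⟨hb.1, fun β hβ => (hb.2 β (hβ.trans_le hγ)).trans (hst β hβ)⟩) hsub)
    fun γ hγ => exists_endHomogeneous_below hreg (hwc.isStrongLimit hreg) F hA hγ
  refine ⟨φ, ?_⟩
  by_contra! hbad
  choose γ hγ hbad using hbad
  obtain ⟨δ, hδ, hγδ⟩ : ∃ δ < κ.ord, ∀ i, γ i ≤ δ :=
    ⟨max (γ 0) (γ 1), max_lt (hγ 0) (hγ 1),
      Fin.forall_fin_two.2 ⟨le_max_left _ _, le_max_right _ _⟩⟩
  have hfin : #(ULift.{1} (Fin 2)) < Cardinal.lift.{1} κ :=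
    (Cardinal.lt_aleph0_of_finite _).trans_le (Cardinal.aleph0_le_lift.2 hreg.aleph0_le)
  obtain ⟨⟨i⟩, hi⟩ := exists_fiber_mem_Iplus hreg hfin (fun b => ULift.up (φ (supK κ b))) (hφ δ hδ)
  refine hbad i (Iplus_mono hi (fun b hb => ?_) hsub)
  exact ⟨hb.1.1, congrArg ULift.down hb.2, fun β hβ => hb.1.2 β (hβ.trans_le (hγδ i))⟩

theorem arrowPConst_of_lt_covM (hreg : κ.IsRegular) (hle : κ ≤ lam) (hwc : WeaklyCompact κ)
    (hcov : #(smallSet κ lam) < Cardinal.lift.{1} (covM κ κ)) :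
    ArrowPConst κ lam (Ikl κ lam) := by
  intro F A hA
  obtain ⟨φ, i, hφ⟩ := hwc.exists_endHomogeneous hreg F hA
  have hanti : Antitone fun γ => {b ∈ A | φ (supK κ b) = i ∧ ∀ β < γ, F β b = φ β} :=
    fun γ γ' h b hb => ⟨hb.1, hb.2.1, fun β hβ => hb.2.2 β (hβ.trans_le h)⟩
  obtain ⟨B, hB, hBA, hdiag⟩ := exists_diagonal_mem_Iplus hreg hle hcov hanti hφ
  refine ⟨B, hB, fun b hb => (hBA hb).1, i, ?_⟩
  rintro _ ⟨a, ha, b, hb, hab, rfl⟩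
  exact ((hdiag a ha b hb hab).2.2 _ (Order.lt_succ _)).trans (hBA ha).2.1

end Homogeneous

section Arrow

variable {κ lam : Cardinal.{0}} {A : Set (Set Ordinal.{0})}

theorem ArrowPConst.arrowPKKsemi (h : ArrowPConst κ lam (Ikl κ lam)) (hreg : κ.IsRegular)
    (hle : κ ≤ lam) : ArrowPKKsemi κ lam (Ikl κ lam) κ.ord := by
  intro F A hA
  obtain ⟨B, hB, hBA, i, hi⟩ := h (fun α b => F α (supK κ b)) A hA
  have hconst : ∀ p ∈ pairsKK κ B, F p.1 p.2 = i := by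
    rintro _ ⟨a, ha, b, hb, hab, rfl⟩
    exact hi _ ⟨a, ha, b, hb, hab, rfl⟩
  refine ⟨B, hBA, ?_⟩
  rcases Fin.exists_fin_two.1 ⟨i, rfl⟩ with rfl | rfl
  · exact Or.inl ⟨hB, hconst⟩
  · exact Or.inr ⟨ordType_supK_image hreg hle hB, hconst⟩

theorem ArrowPKKsemi.exists_forall_or {Hm : Set (Set (Set Ordinal.{0}))} {θ : Ordinal.{0}}
    (h : ArrowPKKsemi κ lam Hm θ) (R : Ordinal.{0} → Ordinal.{0} → Prop)
    (hA : A ∈ plusOf κ lam Hm) :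
    (∃ B ∈ plusOf κ lam Hm, B ⊆ A ∧
        ∀ a ∈ B, ∀ b ∈ B, supK κ a < supK κ b → R (supK κ a) (supK κ b)) ∨
      ∃ S ⊆ supK κ '' A, OrdType S θ ∧ ∀ α ∈ S, ∀ β ∈ S, α < β → ¬ R α β := by
  classical
  obtain ⟨B, hBA, ⟨hB, hR⟩ | ⟨hB, hR⟩⟩ := h (fun α β => if R α β then 0 else 1) A hA
  · refine Or.inl ⟨B, hB, hBA, fun a ha b hb hab => ?_⟩
    by_contra hnot
    simpa only [if_neg hnot, one_ne_zero] using hR _ ⟨a, ha, b, hb, hab, rfl⟩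
  · refine Or.inr ⟨supK κ '' B, image_mono hBA, hB, ?_⟩
    rintro _ ⟨a, ha, rfl⟩ _ ⟨b, hb, rfl⟩ hab hyes
    simpa only [if_pos hyes, zero_ne_one] using hR _ ⟨a, ha, b, hb, hab, rfl⟩

theorem ArrowPKKsemi.weaklyCompact (h : ArrowPKKsemi κ lam (Ikl κ lam) κ.ord)
    (hreg : κ.IsRegular) (hle : κ ≤ lam) : WeaklyCompact κ := by
  intro f
  rcases h.exists_forall_or (fun α β => f α β = 0) smallSet_mem_Iplus with
    ⟨B, hB, hBs, hf⟩ | ⟨S, hSs, hS, hf⟩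
  · refine ⟨supK κ '' B, supK_image_subset hreg hBs, ordType_supK_image hreg hle hB, 0, ?_⟩
    rintro _ ⟨a, ha, rfl⟩ _ ⟨b, hb, rfl⟩ hab
    exact hf a ha b hb hab
  · exact ⟨S, hSs.trans (supK_image_subset hreg Subset.rfl), hS, 1,
      fun α hα β hβ hαβ => Fin.eq_one_of_ne_zero _ (hf α hα β hβ hαβ)⟩

theorem ArrowPKKsemi.exists_monotone (h : ArrowPKKsemi κ lam (Ikl κ lam) κ.ord)
    (hreg : κ.IsRegular) (g : Ordinal.{0} → Ordinal.{0}) (hA : A ∈ Iplus κ lam) :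
    ∃ B ∈ Iplus κ lam, B ⊆ A ∧
      ∀ a ∈ B, ∀ b ∈ B, supK κ a < supK κ b → g (supK κ a) ≤ g (supK κ b) := by
  refine (h.exists_forall_or (fun α β => g α ≤ g β) hA).resolve_right ?_
  rintro ⟨S, hSA, hS, hg⟩
  have hSκ := hSA.trans (supK_image_subset hreg (mem_Iplus_iff.1 hA).1)
  obtain ⟨s, hs, -⟩ := hS.exists_ge hreg.ord_pos
  obtain ⟨m, hm, hmin⟩ := exists_minimalFor_of_wellFoundedLT (· ∈ S) g ⟨s, hs⟩
  obtain ⟨β, hβ, hmβ⟩ := (ordType_ord_iff hreg hSκ).1 hS m (hSκ hm)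
  have hlt := not_le.1 (hg m hm β hβ hmβ)
  exact (hmin hβ hlt.le).not_gt hlt

theorem exists_mem_subset_sdiff_supK (hreg : κ.IsRegular) (hle : κ ≤ lam) (hA : A ∈ Iplus κ lam)
    {e : Set Ordinal.{0}} (he : e ∈ smallSet κ lam) : ∃ b ∈ A, e ⊆ b \ {supK κ b} := by
  have hlim := Cardinal.isSuccLimit_ord hreg.aleph0_le
  have hA' := mem_Iplus_iff.1 hA
  obtain ⟨b, hb, heb, hlt⟩ := exists_mem_le_supK hreg.aleph0_le hle hA he
    (hlim.succ_lt (supK_lt hreg he.2))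
  refine ⟨b, hb, subset_sdiff_singleton heb fun hmem => ?_⟩
  exact (Order.succ_le_iff.1 hlt).not_ge (le_supK hmem (supK_lt hreg (hA'.1 hb).2))

theorem ArrowPKKsemi.exists_separated (h : ArrowPKKsemi κ lam (Ikl κ lam) κ.ord)
    (hreg : κ.IsRegular) (hle : κ ≤ lam) {l r : Ordinal.{0} → Ordinal.{0}}
    (hr : ∀ α, r α < κ.ord) (hA : A ∈ Iplus κ lam)
    (hl : ∀ b ∈ A, ∀ ξ ∈ b, ξ < supK κ b → ξ < l (supK κ b)) :
    ∃ B ∈ Iplus κ lam, B ⊆ A ∧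
      ∀ a ∈ B, ∀ b ∈ B, supK κ a < supK κ b → r (supK κ a) ≤ l (supK κ b) := by
  obtain ⟨B₁, hB₁, hB₁A, hmono⟩ := h.exists_monotone hreg l hA
  have hunb : ∀ ξ < κ.ord, ∃ b ∈ B₁, ξ < l (supK κ b) := fun ξ hξ => by
    obtain ⟨b, hb, hξb⟩ := exists_mem_subset_sdiff_supK hreg hle hB₁
      (singleton_mem_smallSet hreg.aleph0_le (ord_lt_of_le hle hξ))
    obtain ⟨hmem, hne⟩ := singleton_subset_iff.1 hξb
    exact ⟨b, hb, hl b (hB₁A hb) ξ hmem ((le_supK hmem hξ).lt_of_ne hne)⟩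
  rcases h.exists_forall_or (fun α β => r α ≤ l β) hB₁ with ⟨B, hB, hBB₁, hrl⟩ | ⟨S, hSB, hS, hrl⟩
  · exact ⟨B, hB, hBB₁.trans hB₁A, hrl⟩
  · have hB₁κ := (mem_Iplus_iff.1 hB₁).1
    have hSκ := hSB.trans (supK_image_subset hreg hB₁κ)
    obtain ⟨α, hα, -⟩ := hS.exists_ge hreg.ord_pos
    obtain ⟨b, hb, hrb⟩ := hunb (r α) (hr α)
    obtain ⟨β, hβ, hlt⟩ := (ordType_ord_iff hreg hSκ).1 hS (max α (supK κ b))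
      (max_lt (hSκ hα) (supK_lt hreg (hB₁κ hb).2))
    obtain ⟨b', hb', rfl⟩ := hSB hβ
    have hle' := hmono b hb b' hb' ((le_max_right _ _).trans_lt hlt)
    exact absurd (hrb.le.trans hle') (hrl α hα _ hβ ((le_max_left _ _).trans_lt hlt))

end Arrow

section Forcing

variable {ν ρ : Cardinal.{0}}

/-- A forcing condition, coded as the pair of the set of ordinals that it puts into the point and of
the set of those that it keeps out: `c ≤ c'` says that `c'` extends `c`, and `c ≤ (x, xᶜ)` that the
point `x` satisfies `c`. Unlike with the pairs of `IsCond`, a chain has its union as supremum. -/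
structure IsPartialPoint (ν ρ : Cardinal.{0}) (c : Set Ordinal.{0} × Set Ordinal.{0}) : Prop where
  subset : c.1 ∪ c.2 ⊆ Iio ρ.ord
  small : #(c.1 ∪ c.2 : Set Ordinal.{0}) < Cardinal.lift.{1} ν
  disjoint : Disjoint c.1 c.2

/-- `E` includes a dense open set: below every condition there is one all of whose points are in
`E`. -/
def HasDenseInterior (ν ρ : Cardinal.{0}) (E : Set (Set Ordinal.{0})) : Prop :=
  ∀ c, IsPartialPoint ν ρ c →
    ∃ c', c ≤ c' ∧ IsPartialPoint ν ρ c' ∧ ∀ x ∈ cantor ρ, c' ≤ (x, xᶜ) → x ∈ E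

theorem DenseOpen.hasDenseInterior {D : Set (Set Ordinal.{0})} (hD : DenseOpen ν ρ D)
    (hν : ℵ₀ ≤ ν) : HasDenseInterior ν ρ D := by
  intro c hc
  obtain ⟨x, ⟨-, hxc⟩, hxD⟩ := hD.2.2 (c.1 ∪ c.2) c.1 ⟨hc.subset, subset_union_left, hc.small⟩
  obtain ⟨a, t, ⟨ha, -, hcard⟩, ⟨-, rfl⟩, haD⟩ := hD.2.1 x hxD
  let u := c.1 ∪ c.2 ∪ a
  refine ⟨(u ∩ x, u \ x), ⟨fun α hα => ?_, fun α hα => ⟨?_, fun hαx => ?_⟩⟩, ⟨?_, ?_, ?_⟩,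
    fun y hy ⟨hy₁, hy₂⟩ => haD ⟨hy, Set.ext fun α => ⟨fun hα => ⟨?_, hα.2⟩, fun hα => ⟨?_, hα.2⟩⟩⟩⟩
  · exact ⟨Or.inl (Or.inl hα), (hxc.ge hα).1⟩
  · exact Or.inl (Or.inr hα)
  · exact hc.disjoint.le_bot ⟨hxc.le ⟨hαx, Or.inr hα⟩, hα⟩
  · rw [inter_union_sdiff]
    exact union_subset hc.subset ha
  · rw [inter_union_sdiff]
    exact (mk_union_le _ _).trans_lt
      (Cardinal.add_lt_of_lt (Cardinal.aleph0_le_lift.2 hν) hc.small hcard)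
  · exact disjoint_sdiff_right.mono_left inter_subset_right
  · by_contra hαx
    exact hy₂ ⟨Or.inr hα.2, hαx⟩ hα.1
  · exact hy₁ ⟨Or.inr hα.2, hα.1⟩

theorem isPartialPoint_sSup {C : Set (Set Ordinal.{0} × Set Ordinal.{0})} (hν : ν.IsRegular)
    (hC : IsChain (· ≤ ·) C) (hcard : #C < Cardinal.lift.{1} ν)
    (h : ∀ c ∈ C, IsPartialPoint ν ρ c) : IsPartialPoint ν ρ (sSup C) := by
  have hunion : (sSup C).1 ∪ (sSup C).2 = ⋃ c ∈ C, (c.1 ∪ c.2) := by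
    simp only [Prod.fst_sSup, Prod.snd_sSup, sSup_eq_sUnion, sUnion_image, ← iUnion_union_distrib]
  refine ⟨?_, ?_, ?_⟩
  · rw [hunion]
    exact iUnion₂_subset fun c hc => (h c hc).subset
  · rw [hunion]
    exact (Cardinal.card_biUnion_lt_iff_forall_of_isRegular hν.lift hcard).2
      fun c hc => (h c hc).small
  · simp only [Prod.fst_sSup, Prod.snd_sSup, sSup_eq_sUnion, sUnion_image, disjoint_iUnion_left,
      disjoint_iUnion_right]
    intro d hd c hc
    rcases hC.total hc hd with hle | hle
    · exact (h d hd).disjoint.mono_left hle.1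
    · exact (h c hc).disjoint.mono_right hle.2

theorem exists_recursive_chain {ι P : Type*} [LinearOrder ι] [WellFoundedLT ι] [CompleteLattice P]
    {step : ι → P → P} (hstep : ∀ i p, p ≤ step i p) (c : P) :
    ∃ r : ι → P, Monotone r ∧ ∀ j, c ≤ r j ∧ r j = step j (sSup (insert c (r '' Iio j))) := by
  let r : ι → P := WellFoundedLT.fix fun j ih =>
    step j (sSup (insert c (range fun k : Iio j => ih k k.2)))
  have hr : ∀ j, r j = step j (sSup (insert c (r '' Iio j))) := fun j => by
    rw [image_eq_range]
    exact WellFoundedLT.fix_eq _ j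
  have hle : ∀ j, sSup (insert c (r '' Iio j)) ≤ r j := fun j => (hstep j _).trans (hr j).ge
  refine ⟨r, monotone_iff_forall_lt.2 fun k j hkj => ?_, fun j => ⟨?_, hr j⟩⟩
  · exact (le_sSup (mem_insert_of_mem c (mem_image_of_mem r (mem_Iio.2 hkj)))).trans (hle j)
  · exact (le_sSup (mem_insert c _)).trans (hle j)

theorem HasDenseInterior.iInter {ι : Type 1} {E : ι → Set (Set Ordinal.{0})} (hν : ν.IsRegular)
    (hι : #ι < Cardinal.lift.{1} ν) (hE : ∀ i, HasDenseInterior ν ρ (E i)) :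
    HasDenseInterior ν ρ (⋂ i, E i) := by
  intro c hc
  obtain ⟨_, _⟩ := exists_wellFoundedLT ι
  have hext : ∀ i d, ∃ d', d ≤ d' ∧ (IsPartialPoint ν ρ d → IsPartialPoint ν ρ d' ∧
      ∀ x ∈ cantor ρ, d' ≤ (x, xᶜ) → x ∈ E i) := fun i d => by
    by_cases hd : IsPartialPoint ν ρ d
    · obtain ⟨d', hdd', hd', hx⟩ := hE i d hd
      exact ⟨d', hdd', fun _ => ⟨hd', hx⟩⟩
    · exact ⟨d, le_rfl, fun h => absurd h hd⟩
  choose step hle hstep using hext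
  obtain ⟨r, hmono, hr⟩ := exists_recursive_chain hle c
  have hstage : ∀ s : Set ι, (∀ j ∈ s, IsPartialPoint ν ρ (r j)) →
      IsPartialPoint ν ρ (sSup (insert c (r '' s))) := fun s hs => by
    refine isPartialPoint_sSup hν ?_ ?_ ?_
    · exact (hmono.isChain_range.mono (image_subset_range r s)).insert <|
        forall_mem_image.2 fun j _ _ => Or.inl (hr j).1
    · exact (mk_insert_le.trans (add_le_add_left (mk_image_le.trans (mk_set_le s)) 1)).trans_lt <|
        Cardinal.add_lt_of_lt (Cardinal.aleph0_le_lift.2 hν.aleph0_le) hι <|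
          Cardinal.one_lt_aleph0.trans_le (Cardinal.aleph0_le_lift.2 hν.aleph0_le)
    · exact forall_mem_insert.2 ⟨hc, forall_mem_image.2 hs⟩
  have hvalid : ∀ j, IsPartialPoint ν ρ (r j) := fun j => by
    induction j using WellFoundedLT.induction with
    | ind j ih => exact (hr j).2 ▸ (hstep j _ (hstage (Iio j) ih)).1
  refine ⟨sSup (insert c (r '' univ)), le_sSup (mem_insert c _), hstage univ fun j _ => hvalid j,
    fun x hx hrx => mem_iInter.2 fun j => ?_⟩
  refine (hstep j _ (hstage (Iio j) fun k _ => hvalid k)).2 x hx ?_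
  rw [← (hr j).2]
  exact (le_sSup (mem_insert_of_mem c (mem_image_of_mem r (mem_univ j)))).trans hrx

theorem IsPartialPoint.ite {c d : Set Ordinal.{0} × Set Ordinal.{0}} (hc : IsPartialPoint ν ρ c)
    (hd : IsPartialPoint ν ρ d) (hν : ℵ₀ ≤ ν) (a : Set Ordinal.{0}) :
    IsPartialPoint ν ρ (a.ite c.1 d.1, a.ite c.2 d.2) := by
  have hsub : a.ite c.1 d.1 ∪ a.ite c.2 d.2 ⊆ (c.1 ∪ c.2) ∪ (d.1 ∪ d.2) := by
    simp only [Set.ite]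
    grind
  refine ⟨hsub.trans (union_subset hc.subset hd.subset), ?_, ?_⟩
  · exact (mk_le_mk_of_subset hsub).trans_lt <| (mk_union_le _ _).trans_lt
      (Cardinal.add_lt_of_lt (Cardinal.aleph0_le_lift.2 hν) hc.small hd.small)
  · have hcd := hc.disjoint
    have hdd := hd.disjoint
    simp only [disjoint_left, Set.ite] at hcd hdd ⊢
    grind

theorem HasDenseInterior.preimage_ite {E : Set (Set Ordinal.{0})} (hE : HasDenseInterior ν ρ E)
    (hν : ℵ₀ ≤ ν) {a : Set Ordinal.{0}} (ha : a ∈ smallSet ν ρ) (p : Set Ordinal.{0}) :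
    HasDenseInterior ν ρ {y | a.ite p y ∈ E} := by
  intro c hc
  have hp : IsPartialPoint ν ρ (a ∩ p, a \ p) :=
    ⟨(inter_union_sdiff a p).le.trans ha.1, (inter_union_sdiff a p).symm ▸ ha.2,
      disjoint_sdiff_right.mono_left inter_subset_right⟩
  obtain ⟨d, ⟨hcd₁, hcd₂⟩, hd, hdE⟩ := hE _ (hp.ite hc hν a)
  have hdisj := hd.disjoint
  simp only [disjoint_left] at hdisj
  simp only [subset_def, Set.ite] at hcd₁ hcd₂
  refine ⟨(a.ite c.1 d.1, a.ite c.2 d.2), ⟨?_, ?_⟩, hc.ite hd hν a,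
    fun y hy ⟨hdy₁, hdy₂⟩ => hdE _ ?_ ⟨?_, ?_⟩⟩
  · simp only [subset_def, Set.ite]
    grind
  · simp only [subset_def, Set.ite]
    grind
  · exact union_subset (inter_subset_right.trans ha.1) (sdiff_subset.trans hy)
  · simp only [subset_def, Set.ite] at hdy₁ ⊢
    grind
  · simp only [subset_def, Set.ite, mem_compl_iff, mem_union, mem_sdiff] at hdy₂ ⊢
    grind

end Forcing

section Blocks

variable {κ lam : Cardinal.{0}}

theorem mk_powerset_lt_lift (hκ : κ.IsStrongLimit) {s : Set Ordinal.{0}}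
    (hs : #s < Cardinal.lift.{1} κ) : #(𝒫 s) < Cardinal.lift.{1} κ := by
  obtain ⟨c, hcκ, hc⟩ := Cardinal.lt_lift_iff.1 hs
  rw [Cardinal.mk_powerset, ← hc, ← Cardinal.lift_two_power, Cardinal.lift_lt]
  exact hκ.isStrongPrelimit hcκ

/-- A subset of a bounded interval `[left, right)` of `κ`, that is, a `0`-`1` sequence on that
interval; a point of `^κ2` can be pasted together from blocks on disjoint intervals. -/
@[ext]
structure Block (κ : Cardinal.{0}) where
  left : Ordinal.{0}
  right : Ordinal.{0}
  set : Set Ordinal.{0}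
  left_le_right : left ≤ right
  right_lt : right < κ.ord
  subset : set ⊆ Ico left right

/-- The point `x` of `^κ2` agrees with the block `p` on the interval of `p`. -/
def Block.Matches (p : Block κ) (x : Set Ordinal.{0}) : Prop :=
  x ∩ Ico p.left p.right = p.set

theorem nonempty_block (hκ : κ ≠ 0) : Nonempty (Block κ) :=
  ⟨⟨0, 0, ∅, le_rfl, Cardinal.ord_pos.2 (pos_iff_ne_zero.2 hκ), empty_subset _⟩⟩

theorem mk_block_le (hκ : κ.IsStrongLimit) : #(Block κ) ≤ Cardinal.lift.{1} κ := by
  have hℵ : ℵ₀ ≤ Cardinal.lift.{1} κ := Cardinal.aleph0_le_lift.2 hκ.aleph0_le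
  let bounded : Set (Set Ordinal.{0}) := ⋃ δ : Iio κ.ord, 𝒫 (Iio δ.1)
  have hbounded : #bounded ≤ Cardinal.lift.{1} κ := by
    refine Cardinal.mk_iUnion_le_sum_mk.trans <| (Cardinal.sum_le_sum _ _ fun δ =>
      (mk_powerset_lt_lift hκ (mk_Iio_lt_lift δ.2)).le).trans ?_
    rw [Cardinal.sum_const', mk_Iio_ord, Cardinal.mul_eq_self hℵ]
  let code : Block κ → Iio κ.ord × Iio κ.ord × bounded := fun p =>
    (⟨p.left, p.left_le_right.trans_lt p.right_lt⟩, ⟨p.right, p.right_lt⟩,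
      ⟨p.set, mem_iUnion.2 ⟨⟨p.right, p.right_lt⟩, fun _ hα => (p.subset hα).2⟩⟩)
  have hcode : Function.Injective code := fun p q h =>
    Block.ext (congrArg (fun c => c.1.1) h) (congrArg (fun c => c.2.1.1) h)
      (congrArg (fun c => c.2.2.1) h)
  calc #(Block κ) ≤ #(Iio κ.ord × Iio κ.ord × bounded) := Cardinal.mk_le_of_injective hcode
    _ = #(Iio κ.ord) * (#(Iio κ.ord) * #bounded) := by simp only [Cardinal.mul_def]
    _ ≤ Cardinal.lift.{1} κ := by
      rw [mk_Iio_ord]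
      exact Cardinal.mul_le_of_le hℵ le_rfl (Cardinal.mul_le_of_le hℵ le_rfl hbounded)

/-- The block need not know what a point does below `ξ`: since `κ` is a strong limit, there are
fewer than `κ` possibilities, and each of them can be met in turn. -/
theorem exists_block (hreg : κ.IsRegular) (hκ : κ.IsStrongLimit) {ι : Type 1}
    (hι : #ι < Cardinal.lift.{1} κ) {D : ι → Set (Set Ordinal.{0})}
    (hD : ∀ i, DenseOpen κ κ (D i)) {ξ : Ordinal.{0}} (hξ : ξ < κ.ord) :
    ∃ p : Block κ, p.left = ξ ∧ ∀ x ∈ cantor κ, p.Matches x → ∀ i, x ∈ D i := by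
  have hξκ : Iio ξ ∈ smallSet κ κ := ⟨Iio_subset_Iio hξ.le, mk_Iio_lt_lift hξ⟩
  have hE : HasDenseInterior κ κ (⋂ j : ι × 𝒫 (Iio ξ), {y | (Iio ξ).ite j.2.1 y ∈ D j.1}) := by
    refine HasDenseInterior.iInter hreg ?_ fun j =>
      ((hD j.1).hasDenseInterior hreg.aleph0_le).preimage_ite hreg.aleph0_le hξκ j.2.1
    rw [← Cardinal.mul_def]
    exact Cardinal.mul_lt_of_lt (Cardinal.aleph0_le_lift.2 hreg.aleph0_le) hι
      (mk_powerset_lt_lift hκ hξκ.2)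
  have hempty : IsPartialPoint κ κ (∅, ∅) := by
    have h : ∅ ∈ smallSet κ κ := empty_mem_smallSet hreg.pos.ne'
    rw [← union_self ∅] at h
    exact ⟨h.1, h.2, disjoint_bot_left⟩
  obtain ⟨c, -, hc, hcE⟩ := hE _ hempty
  obtain ⟨δ, hδ, hcδ⟩ := exists_ord_forall_mem_lt hreg hc.small hc.subset
  refine ⟨⟨ξ, max ξ δ, c.1 ∩ Ici ξ, le_max_left ξ δ, max_lt hξ hδ, fun α hα =>
    ⟨hα.2, (hcδ α (Or.inl hα.1)).trans_le (le_max_right ξ δ)⟩⟩, rfl, fun x hx hpx i => ?_⟩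
  have hxc : ∀ α ∈ c.1 ∪ c.2, ξ ≤ α → (α ∈ x ↔ α ∈ c.1) := fun α hα hξα => by
    have := Set.ext_iff.1 hpx α
    simpa [hξα, hcδ α hα] using this
  have hcy : c ≤ ((Iio ξ).ite c.1 x, ((Iio ξ).ite c.1 x)ᶜ) := by
    have hdisj := hc.disjoint
    rw [disjoint_left] at hdisj
    simp only [Prod.le_def, subset_def, Set.ite, mem_compl_iff, mem_union, mem_inter_iff, mem_sdiff,
      mem_Iio, ← not_le] at hxc ⊢
    grind
  have hback : (Iio ξ).ite (x ∩ Iio ξ) ((Iio ξ).ite c.1 x) = x := by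
    simp only [Set.ite]
    grind
  have hy : (Iio ξ).ite c.1 x ∈ cantor κ :=
    union_subset (inter_subset_right.trans hξκ.1) (sdiff_subset.trans hx)
  exact hback ▸ mem_iInter.1 (hcE _ hy hcy) (i, ⟨x ∩ Iio ξ, inter_subset_right⟩)

theorem matches_iUnion {p : Ordinal.{0} → Block κ} {T : Set Ordinal.{0}}
    (hT : ∀ α ∈ T, ∀ β ∈ T, α < β → (p α).right ≤ (p β).left) {α : Ordinal.{0}} (hα : α ∈ T) :
    (p α).Matches (⋃ β ∈ T, (p β).set) := by
  refine subset_antisymm (fun γ ⟨hγ, hγα⟩ => ?_)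
    (subset_inter (subset_biUnion_of_mem (u := fun β => (p β).set) hα) (p α).subset)
  obtain ⟨β, hβ, hγβ⟩ := mem_iUnion₂.1 hγ
  have hγβ' := (p β).subset hγβ
  rcases lt_trichotomy α β with hlt | rfl | hlt
  · exact absurd ((hT α hα β hβ hlt).trans hγβ'.1) hγα.2.not_ge
  · exact hγβ
  · exact absurd ((hT β hβ α hα hlt).trans hγα.1) hγβ'.2.not_ge

theorem iUnion_block_mem_cantor (p : Ordinal.{0} → Block κ) (T : Set Ordinal.{0}) :
    ⋃ β ∈ T, (p β).set ∈ cantor κ :=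
  iUnion₂_subset fun β _ _ hγ => ((p β).subset hγ).2.trans (p β).right_lt

end Blocks

section CoveringNumber

variable {κ lam : Cardinal.{0}} {ι : Type 1} {p : Ordinal.{0} → Block κ} {e : ι → Set Ordinal.{0}}
  {D : ι → Set (Set Ordinal.{0})}

/-- The sets `b` whose largest ordinal `c` below `κ` codes, through `p`, a block that starts above
all the other elements of `b ∩ κ` and that puts the points it matches into `D i` whenever
`e i ⊆ b \ {c}`; leaving out `c` lets the block be chosen before its code. -/
def decidingSets (lam : Cardinal.{0}) (p : Ordinal.{0} → Block κ) (e : ι → Set Ordinal.{0})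
    (D : ι → Set (Set Ordinal.{0})) : Set (Set Ordinal.{0}) :=
  {b ∈ smallSet κ lam | (∀ ξ ∈ b, ξ < supK κ b → ξ < (p (supK κ b)).left) ∧
    ∀ i, e i ⊆ b \ {supK κ b} → ∀ x ∈ cantor κ, (p (supK κ b)).Matches x → x ∈ D i}

theorem decidingSets_mem_Iplus (hreg : κ.IsRegular) (hκ : κ.IsStrongLimit) (hle : κ ≤ lam)
    (hp : ∀ q, ∀ ξ < κ.ord, ∃ c < κ.ord, ξ < c ∧ p c = q) (he : Function.Injective e)
    (hD : ∀ i, DenseOpen κ κ (D i)) : decidingSets lam p e D ∈ Iplus κ lam := by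
  refine mem_Iplus_iff.2 ⟨fun b hb => hb.1, fun a ha => ?_⟩
  obtain ⟨ξ, hξ, haξ⟩ := exists_ord_forall_mem_lt hreg
    ((mk_le_mk_of_subset inter_subset_left).trans_lt ha.2) (inter_subset_right (s := a))
  have hι : #{i // e i ⊆ a} < Cardinal.lift.{1} κ :=
    (Cardinal.mk_le_of_injective (f := fun i : {i // e i ⊆ a} => (⟨e i, i.2⟩ : 𝒫 a))
      fun i j h => Subtype.ext (he (congrArg Subtype.val h))).trans_lt (mk_powerset_lt_lift hκ ha.2)
  obtain ⟨q, hqξ, hq⟩ := exists_block hreg hκ hι (fun i => hD i) hξ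
  obtain ⟨c, hc, hξc, rfl⟩ := hp q ξ hξ
  have hsup : supK κ (insert c a) = c :=
    supK_insert hc fun β hβ hβκ => ((haξ β ⟨hβ, hβκ⟩).trans hξc).le
  refine ⟨insert c a, ⟨insert_mem_smallSet hreg.aleph0_le ha (ord_lt_of_le hle hc), ?_, ?_⟩,
    subset_insert c a⟩
  · rw [hsup, hqξ]
    exact fun η hη hηc => haξ η ⟨hη.resolve_left hηc.ne, hηc.trans hc⟩
  · rw [hsup]
    exact fun i hi x hx hxc => hq x hx hxc ⟨i, hi.trans (by simp [sdiff_subset_iff])⟩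

theorem ArrowPKKsemi.exists_generic (h : ArrowPKKsemi κ lam (Ikl κ lam) κ.ord)
    (hreg : κ.IsRegular) (hle : κ ≤ lam) (he : Function.Injective e)
    (heP : ∀ i, e i ∈ smallSet κ lam) (hD : ∀ i, DenseOpen κ κ (D i)) :
    ∃ x ∈ cantor κ, ∀ i, x ∈ D i := by
  have hκ := (h.weaklyCompact hreg hle).isStrongLimit hreg
  have := nonempty_block hreg.pos.ne'
  obtain ⟨p, hp⟩ := exists_code_unbounded hreg.aleph0_le (mk_block_le hκ)
  obtain ⟨B, hB, hBA, hsep⟩ := h.exists_separated hreg hle (l := fun α => (p α).left)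
    (fun α => (p α).right_lt) (decidingSets_mem_Iplus hreg hκ hle hp he hD) fun b hb => hb.2.1
  refine ⟨⋃ α ∈ supK κ '' B, (p α).set, iUnion_block_mem_cantor p _, fun i => ?_⟩
  obtain ⟨b, hb, hib⟩ := exists_mem_subset_sdiff_supK hreg hle hB (heP i)
  refine (hBA hb).2.2 i hib _ (iUnion_block_mem_cantor p _) ?_
  exact matches_iUnion (forall_mem_image.2 fun a ha => forall_mem_image.2 (hsep a ha))
    (mem_image_of_mem _ hb)

theorem ArrowPKKsemi.mk_smallSet_lt_covM (h : ArrowPKKsemi κ lam (Ikl κ lam) κ.ord)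
    (hreg : κ.IsRegular) (hle : κ ≤ lam) :
    #(smallSet κ lam) < Cardinal.lift.{1} (covM κ κ) := by
  refine (lt_lift_covM_iff hreg.aleph0_le le_rfl (lift_le_mk_smallSet hreg.aleph0_le hle)).2
    fun 𝒟 hcard h𝒟 => ?_
  obtain ⟨e⟩ := hcard
  obtain ⟨x, hx, hxD⟩ := h.exists_generic hreg hle (e := fun D : 𝒟 => (e D).1)
    (Subtype.val_injective.comp e.injective) (fun D => (e D).2) fun D => h𝒟 D D.2
  exact ⟨x, hx, fun D hD => hxD ⟨D, hD⟩⟩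

end CoveringNumber

theorem weaklyCompact_iff_arrow_general (κ lam : Cardinal.{0}) (hreg : κ.IsRegular)
    (hle : κ ≤ lam) :
    ((WeaklyCompact κ ∧ #(smallSet κ lam) < Cardinal.lift.{1} (covM κ κ)) ↔
        ArrowPConst κ lam (Ikl κ lam)) ∧
      (ArrowPConst κ lam (Ikl κ lam) ↔ ArrowPKKsemi κ lam (Ikl κ lam) κ.ord) := by
  have h₁₂ : WeaklyCompact κ ∧ #(smallSet κ lam) < Cardinal.lift.{1} (covM κ κ) →
      ArrowPConst κ lam (Ikl κ lam) := fun ⟨hwc, hcov⟩ => arrowPConst_of_lt_covM hreg hle hwc hcov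
  have h₂₃ : ArrowPConst κ lam (Ikl κ lam) → ArrowPKKsemi κ lam (Ikl κ lam) κ.ord :=
    fun h => h.arrowPKKsemi hreg hle
  have h₃₁ : ArrowPKKsemi κ lam (Ikl κ lam) κ.ord →
      WeaklyCompact κ ∧ #(smallSet κ lam) < Cardinal.lift.{1} (covM κ κ) :=
    fun h => ⟨h.weaklyCompact hreg hle, h.mk_smallSet_lt_covM hreg hle⟩
  exact ⟨⟨h₁₂, h₃₁ ∘ h₂₃⟩, ⟨h₂₃, h₁₂ ∘ h₃₁⟩⟩

/-- The following are equivalent: (i) `κ` is weakly compact and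
`λ^{<κ} < cov(M_{κ,κ})`; (ii) `I_{κ,λ}⁺ →_κ (I_{κ,λ}⁺)²`;
(iii) `I_{κ,λ}⁺ →_{κ,κ} (I_{κ,λ}⁺; κ)²`. -/
theorem weaklyCompact_iff_arrow (κ lam : Cardinal.{0}) (hreg : κ.IsRegular) (huc : ℵ₀ < κ)
    (hlt : κ < lam) :
    ((WeaklyCompact κ ∧ #(smallSet κ lam) < Cardinal.lift.{1} (covM κ κ)) ↔
        ArrowPConst κ lam (Ikl κ lam)) ∧
      (ArrowPConst κ lam (Ikl κ lam) ↔ ArrowPKKsemi κ lam (Ikl κ lam) κ.ord) :=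
  weaklyCompact_iff_arrow_general κ lam hreg hlt.le

end PaperFormal
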